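/- arXiv:2101.11295 — 2 statements merged into one kernel-verified Lean document; each statement's English description precedes it below -/
import Mathlib

section
/- Let β ∈ (0,1), let g : X × U → ℝ be a stage cost bounded on Y with g ≥ 0 on Y, and let J and V denote the associated discounted cost and optimal value function. Assume V(x) ≤ C · inf{g(x,u) : (x,u) ∈ Y} for all x ∈ 𝕏 with a constant C ≥ 1, and set κ := (1−β) − 1/C. If x₀ ∈ 𝕏, u is admissible for x₀ with trajectory x(·), and J(x₀,u) ≤ V(x₀) + δ for some δ ≥ 0, then for every k ∈ ℕ: V(x(k+1)) − V(x(k)) ≤ (κ/β) · V(x(k)) + δ/β^{k+1}. -/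
/-!
Two dynamic-programming facts carry the proof. Splitting off the first stage gives
`J(x, u) = g(x, u 0) + β J(x⁺, u(· + 1))` (`Jinf_succ`), and prefixing a control value to an
admissible sequence gives `V(x) ≤ g(x, u 0) + β V(x⁺)` (`Vinf_le_stage_add`), with
`x⁺ = f(x, u 0)`. Subtracting, a `δ`-optimal sequence has a `δ/β`-optimal tail, so after `k` steps
the tail is `δ/β^k`-optimal (`Jinf_tail_le`). Applied at `x(k)`, this yields
`g(x(k), u(k)) + β V(x(k+1)) ≤ J(x(k), u(k + ·)) ≤ V(x(k)) + δ/β^k`, and the growth bound on `V`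
gives `V(x(k))/C ≤ g(x(k), u(k))`. Dividing by `β` is the claim.
-/

open scoped BigOperators

variable {X U : Type*} [NormedAddCommGroup X] [NormedAddCommGroup U]

/-- Trajectory of the controlled system `x(k+1) = f(x(k), u(k))`, `x(0) = x₀`. -/
def traj (f : X → U → X) (x₀ : X) (u : ℕ → U) : ℕ → X
  | 0 => x₀
  | k + 1 => f (traj f x₀ u k) (u k)

/-- A control sequence is admissible for `x₀` if the state-control pairs stay in `Y`. -/
def Admissible (f : X → U → X) (Y : Set (X × U)) (x₀ : X) (u : ℕ → U) : Prop :=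
  ∀ k : ℕ, (traj f x₀ u k, u k) ∈ Y

/-- The state constraint set `𝕏 = {x | ∃ u, (x,u) ∈ Y}`. -/
def stateSet (Y : Set (X × U)) : Set X := {x : X | ∃ u : U, (x, u) ∈ Y}

/-- Discounted infinite-horizon cost functional. -/
noncomputable def Jinf (β : ℝ) (g : X → U → ℝ) (f : X → U → X) (x₀ : X) (u : ℕ → U) : ℝ :=
  ∑' k : ℕ, β ^ k * g (traj f x₀ u k) (u k)

/-- Optimal value function of the discounted problem. -/
noncomputable def Vinf (β : ℝ) (g : X → U → ℝ) (f : X → U → X) (Y : Set (X × U)) (x₀ : X) : ℝ :=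
  sInf {r : ℝ | ∃ u : ℕ → U, Admissible f Y x₀ u ∧ Jinf β g f x₀ u = r}

/-- Rotated stage cost `ℓ̃(x,u) = ℓ(x,u) − ℓ(xe,ue) + λ(x) − βλ(f(x,u))`. -/
def rot (β : ℝ) (g : X → U → ℝ) (f : X → U → X) (lam : X → ℝ) (xe : X) (ue : U)
    (x : X) (u : U) : ℝ :=
  g x u - g xe ue + lam x - β * lam (f x u)

/-- Class `K∞` comparison functions. -/
structure KInfty (α : ℝ → ℝ) : Prop where
  cont : ContinuousOn α (Set.Ici 0)
  mono : StrictMonoOn α (Set.Ici 0)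
  zero : α 0 = 0
  unbounded : ∀ c : ℝ, ∃ r : ℝ, 0 ≤ r ∧ c < α r

theorem traj_succ' (f : X → U → X) (x : X) (u : ℕ → U) (k : ℕ) :
    traj f x u (k + 1) = traj f (f x (u 0)) (fun n => u (n + 1)) k := by
  induction k with
  | zero => rfl
  | succ k ih =>
    change f (traj f x u (k + 1)) (u (k + 1)) = _
    rw [ih]
    rfl

theorem Admissible.tail {f : X → U → X} {Y : Set (X × U)} {x : X} {u : ℕ → U}
    (hu : Admissible f Y x u) : Admissible f Y (f x (u 0)) (fun n => u (n + 1)) := by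
  intro k
  rw [← traj_succ']
  exact hu (k + 1)

theorem Admissible.summable {f : X → U → X} {Y : Set (X × U)} {g : X → U → ℝ} {β : ℝ}
    (hβ : β ∈ Set.Ioo (0 : ℝ) 1) (hg : ∃ B : ℝ, ∀ p ∈ Y, |g p.1 p.2| ≤ B)
    {x : X} {u : ℕ → U} (hu : Admissible f Y x u) :
    Summable fun k : ℕ => β ^ k * g (traj f x u k) (u k) := by
  obtain ⟨B, hB⟩ := hg
  refine Summable.of_norm_bounded
    ((summable_geometric_of_lt_one hβ.1.le hβ.2).mul_right B) fun k => ?_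
  rw [Real.norm_eq_abs, abs_mul, abs_of_pos (pow_pos hβ.1 k)]
  exact mul_le_mul_of_nonneg_left (hB _ (hu k)) (pow_pos hβ.1 k).le

theorem Jinf_succ {f : X → U → X} {Y : Set (X × U)} {g : X → U → ℝ} {β : ℝ}
    (hβ : β ∈ Set.Ioo (0 : ℝ) 1) (hg : ∃ B : ℝ, ∀ p ∈ Y, |g p.1 p.2| ≤ B)
    {x : X} {u : ℕ → U} (hu : Admissible f Y x u) :
    Jinf β g f x u = g x (u 0) + β * Jinf β g f (f x (u 0)) (fun n => u (n + 1)) := by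
  unfold Jinf
  rw [(hu.summable hβ hg).tsum_eq_zero_add, ← tsum_mul_left]
  congr 1
  · simp [traj]
  · refine tsum_congr fun k => ?_
    rw [traj_succ', pow_succ']
    ring

theorem Jinf_nonneg {f : X → U → X} {Y : Set (X × U)} {g : X → U → ℝ} {β : ℝ}
    (hβ : β ∈ Set.Ioo (0 : ℝ) 1) (hg0 : ∀ p ∈ Y, 0 ≤ g p.1 p.2)
    {x : X} {u : ℕ → U} (hu : Admissible f Y x u) : 0 ≤ Jinf β g f x u :=
  tsum_nonneg fun k => mul_nonneg (pow_pos hβ.1 k).le (hg0 _ (hu k))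

/-- Since the costs are nonnegative, the infimum defining `V` is a genuine lower bound. -/
theorem Vinf_le_Jinf {f : X → U → X} {Y : Set (X × U)} {g : X → U → ℝ} {β : ℝ}
    (hβ : β ∈ Set.Ioo (0 : ℝ) 1) (hg0 : ∀ p ∈ Y, 0 ≤ g p.1 p.2)
    {x : X} {u : ℕ → U} (hu : Admissible f Y x u) : Vinf β g f Y x ≤ Jinf β g f x u := by
  refine csInf_le ⟨0, ?_⟩ ⟨u, hu, rfl⟩
  rintro r ⟨v, hv, rfl⟩
  exact Jinf_nonneg hβ hg0 hv

/-- One inequality of the dynamic programming principle. -/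
theorem Vinf_le_stage_add {f : X → U → X} {Y : Set (X × U)} {g : X → U → ℝ} {β : ℝ}
    (hβ : β ∈ Set.Ioo (0 : ℝ) 1) (hg : ∃ B : ℝ, ∀ p ∈ Y, |g p.1 p.2| ≤ B)
    (hg0 : ∀ p ∈ Y, 0 ≤ g p.1 p.2) {x : X} {u : ℕ → U} (hu : Admissible f Y x u) :
    Vinf β g f Y x ≤ g x (u 0) + β * Vinf β g f Y (f x (u 0)) := by
  suffices h : (Vinf β g f Y x - g x (u 0)) / β ≤ Vinf β g f Y (f x (u 0)) by
    rw [div_le_iff₀ hβ.1] at h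
    linarith
  refine le_csInf ⟨_, _, hu.tail, rfl⟩ ?_
  rintro r ⟨v, hv, rfl⟩
  -- The competitor applies `u 0` first and then follows `v`.
  let w : ℕ → U := fun n => Nat.casesOn n (u 0) v
  have hw : Admissible f Y x w := by
    rintro (_ | k)
    · exact hu 0
    · rw [traj_succ']
      exact hv k
  have h1 := Vinf_le_Jinf hβ hg0 hw
  have h2 : Jinf β g f x w = g x (u 0) + β * Jinf β g f (f x (u 0)) v := Jinf_succ hβ hg hw
  rw [div_le_iff₀ hβ.1]
  linarith

/-- Tails of a `δ`-optimal control sequence are `δ / β ^ k`-optimal. -/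
theorem Jinf_tail_le {f : X → U → X} {Y : Set (X × U)} {g : X → U → ℝ} {β : ℝ}
    (hβ : β ∈ Set.Ioo (0 : ℝ) 1) (hg : ∃ B : ℝ, ∀ p ∈ Y, |g p.1 p.2| ≤ B)
    (hg0 : ∀ p ∈ Y, 0 ≤ g p.1 p.2) (k : ℕ) {x : X} {u : ℕ → U} {δ : ℝ}
    (hu : Admissible f Y x u) (hJ : Jinf β g f x u ≤ Vinf β g f Y x + δ) :
    Admissible f Y (traj f x u k) (fun n => u (n + k)) ∧
      Jinf β g f (traj f x u k) (fun n => u (n + k)) ≤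
        Vinf β g f Y (traj f x u k) + δ / β ^ k := by
  induction k generalizing x u δ with
  | zero => simpa [traj] using And.intro hu hJ
  | succ k ih =>
    have h1 := Jinf_succ hβ hg hu
    have h2 := Vinf_le_stage_add hβ hg hg0 hu
    have h3 : Jinf β g f (f x (u 0)) (fun n => u (n + 1)) ≤
        Vinf β g f Y (f x (u 0)) + δ / β := by
      rw [← sub_le_iff_le_add', le_div_iff₀ hβ.1]
      linarith
    have h4 := ih hu.tail h3
    rw [traj_succ', pow_succ', ← div_div]
    exact h4

/-- practical Lyapunov decrease of the value function along
near-optimal trajectories, with `κ = (1−β) − 1/C`. -/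
theorem value_function_decrease
    (f : X → U → X) (Y : Set (X × U)) (g : X → U → ℝ)
    (β : ℝ) (hβ : β ∈ Set.Ioo (0 : ℝ) 1)
    (hg_bdd : ∃ B : ℝ, ∀ p ∈ Y, |g p.1 p.2| ≤ B)
    (hg_nonneg : ∀ p ∈ Y, 0 ≤ g p.1 p.2)
    (hadm : ∀ x₀ ∈ stateSet Y, ∃ u : ℕ → U, Admissible f Y x₀ u)
    (C : ℝ) (hC : 1 ≤ C)
    (hV : ∀ x ∈ stateSet Y,
      Vinf β g f Y x ≤ C * sInf {r : ℝ | ∃ v : U, (x, v) ∈ Y ∧ g x v = r})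
    (x₀ : X) (hx₀ : x₀ ∈ stateSet Y) (u : ℕ → U) (hu : Admissible f Y x₀ u)
    (δ : ℝ) (hδ : 0 ≤ δ)
    (hJ : Jinf β g f x₀ u ≤ Vinf β g f Y x₀ + δ) (k : ℕ) :
    Vinf β g f Y (traj f x₀ u (k + 1)) - Vinf β g f Y (traj f x₀ u k) ≤
      (((1 - β) - 1 / C) / β) * Vinf β g f Y (traj f x₀ u k) + δ / β ^ (k + 1) := by
  have hβ0 : 0 < β := hβ.1
  have hC0 : 0 < C := by linarith
  obtain ⟨ha, hJk⟩ := Jinf_tail_le hβ hg_bdd hg_nonneg k hu hJ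
  have h1 := Jinf_succ hβ hg_bdd ha
  have h2 := Vinf_le_Jinf hβ hg_nonneg ha.tail
  simp only [zero_add] at h1 h2
  -- `f (x k) (u k)` is `x (k + 1)` by definition.
  change _ = _ + β * Jinf β g f (traj f x₀ u (k + 1)) _ at h1
  change Vinf β g f Y (traj f x₀ u (k + 1)) ≤
    Jinf β g f (traj f x₀ u (k + 1)) _ at h2
  have h3 : Vinf β g f Y (traj f x₀ u k) / C ≤ g (traj f x₀ u k) (u k) := by
    rw [div_le_iff₀' hC0]
    refine (hV _ ⟨u k, hu k⟩).trans (mul_le_mul_of_nonneg_left ?_ hC0.le)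
    refine csInf_le ⟨0, ?_⟩ ⟨u k, hu k, rfl⟩
    rintro r ⟨v, hv, rfl⟩
    exact hg_nonneg _ hv
  have h4 := mul_le_mul_of_nonneg_left h2 hβ0.le
  have h5 : Vinf β g f Y (traj f x₀ u (k + 1)) ≤
      (Vinf β g f Y (traj f x₀ u k) - Vinf β g f Y (traj f x₀ u k) / C + δ / β ^ k) / β := by
    rw [le_div_iff₀' hβ0]
    linarith
  refine (sub_le_sub_right h5 _).trans_eq ?_
  rw [pow_succ]
  field_simp
  ring
end

section
/- (Near-optimal trajectories stay in the dissipativity neighbourhood.) Let β ∈ (0,1), let f be continuous, let ℓ be bounded on Y and bounded from below, and assume the system is locally discounted strictly (x,u)-dissipative at (x_l^β,u_l^β) on X_N with bounded storage λ and α_β ∈ K∞. Let ρ > 0 with B_ρ(x_l^β) ⊆ X_N, let η ∈ (0,ρ] satisfy ‖f(x,u) − x_l^β‖ < ρ whenever (x,u) ∈ Y, ‖x − x_l^β‖ < η and ‖u − u_l^β‖ < η, set δ := α_β(η) and ℓ̃_min := inf{ℓ̃(x,u) : (x,u) ∈ Y} with ℓ̃_min < 0, and assume β < δ/(2(δ −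 ℓ̃_min)). Assume moreover there is γ ∈ K∞ with |Ṽ_∞(x)| ≤ γ(‖x − x_l^β‖) for all x ∈ X_N. Then for every K ∈ ℕ there exist ε > 0 and θ > 0 such that every x₀ ∈ B_ε(x_l^β) and every admissible control u with J_∞(x₀,u) < V_∞(x₀) + θ satisfy x_u(k,x₀) ∈ X_N for all k ∈ {0,…,K}. (One may take ε = γ^{−1}(σ/2) and θ = σ/2 with σ = β^K δ/(2(1−β)).) -/
/-!
Along an admissible trajectory the rotated discounted cost differs from the original one only by
the constant `lam x₀ - ℓ xl ul / (1 - β)` (`Jinf_rot`, a telescoping argument), so near-optimal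
controls for `ℓ` are near-optimal for the rotated cost.

If the trajectory has been in `X_N` up to time `k` and the pair `(x(k), u(k))` is within `η` of the
equilibrium, the next state lies in the `ρ`-ball and hence in `X_N`. Otherwise the rotated stage
cost at time `k` is at least `δ`, the earlier ones are nonnegative and the later ones are at least
`lmin`, so the rotated cost is at least `β ^ k * δ + β ^ (k + 1) / (1 - β) * lmin`
(`le_tsum_of_stage_bounds`). The bound on `β` makes this larger than `σ = β ^ K * δ / (2 * (1 - β))`
for `k ≤ K`, whereas near-optimality and the bound `γ` on the rotated value function make the
rotated cost smaller than `σ` near the equilibrium.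
-/


open scoped BigOperators

variable {X U : Type*} [NormedAddCommGroup X] [NormedAddCommGroup U]

/-- A bounded sequence is summable against the discount factors. -/
lemma summable_discounted {β : ℝ} (h0 : 0 < β) (h1 : β < 1) {a : ℕ → ℝ} {B : ℝ}
    (ha : ∀ k, |a k| ≤ B) : Summable fun k => β ^ k * a k := by
  refine Summable.of_norm_bounded (g := fun k => β ^ k * B)
    ((summable_geometric_of_lt_one h0.le h1).mul_right B) fun k => ?_
  rw [Real.norm_eq_abs, abs_mul, abs_of_pos (pow_pos h0 k)]
  exact mul_le_mul_of_nonneg_left (ha k) (pow_pos h0 k).le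

/-- Rotating the stage cost shifts the discounted cost by a constant depending only on `x₀`. -/
lemma Jinf_rot {β : ℝ} (h0 : 0 < β) (h1 : β < 1) (f : X → U → X) (ℓ : X → U → ℝ) (lam : X → ℝ)
    (xl : X) (ul : U) (x₀ : X) (u : ℕ → U) {B C : ℝ}
    (hB : ∀ k, |ℓ (traj f x₀ u k) (u k)| ≤ B) (hC : ∀ x, |lam x| ≤ C) :
    Jinf β (rot β ℓ f lam xl ul) f x₀ u
      = Jinf β ℓ f x₀ u + (lam x₀ - ℓ xl ul / (1 - β)) := by
  have hs1 := summable_discounted h0 h1 hB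
  have hs2 := summable_discounted h0 h1 fun k => hC (traj f x₀ u k)
  have hs2' : Summable fun k => β ^ (k + 1) * lam (traj f x₀ u (k + 1)) :=
    (summable_nat_add_iff 1).2 hs2
  have hg := (summable_geometric_of_lt_one h0.le h1).mul_right (ℓ xl ul)
  have htel := hs2.tsum_eq_zero_add
  have hgeo : ∑' k : ℕ, β ^ k * ℓ xl ul = ℓ xl ul / (1 - β) := by
    rw [tsum_mul_right, tsum_geometric_of_lt_one h0.le h1]; ring
  have hsplit : Jinf β (rot β ℓ f lam xl ul) f x₀ u
      = ∑' k : ℕ, (((β ^ k * ℓ (traj f x₀ u k) (u k) - β ^ k * ℓ xl ul)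
          + β ^ k * lam (traj f x₀ u k)) - β ^ (k + 1) * lam (traj f x₀ u (k + 1))) := by
    unfold Jinf
    refine tsum_congr fun k => ?_
    simp only [rot, traj]
    ring
  rw [hsplit, ((hs1.sub hg).add hs2).tsum_sub hs2', (hs1.sub hg).tsum_add hs2,
    hs1.tsum_sub hg, hgeo, htel]
  simp only [Jinf, traj, pow_zero, one_mul]
  ring

/-- Lower bound for a discounted sum whose terms are nonnegative before time `k`, at least `d` at
time `k`, and at least `m` throughout. -/
lemma le_tsum_of_stage_bounds {β : ℝ} (h0 : 0 < β) (h1 : β < 1) {a : ℕ → ℝ} {d m : ℝ} {k : ℕ}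
    (hs : Summable fun j => β ^ j * a j) (hpre : ∀ j < k, 0 ≤ a j) (hk : d ≤ a k)
    (hm : ∀ j, m ≤ a j) :
    β ^ k * d + β ^ (k + 1) / (1 - β) * m ≤ ∑' j, β ^ j * a j := by
  rw [← hs.sum_add_tsum_nat_add (k + 1), Finset.sum_range_succ]
  have hhead : 0 ≤ ∑ j ∈ Finset.range k, β ^ j * a j :=
    Finset.sum_nonneg fun j hj =>
      mul_nonneg (pow_pos h0 j).le (hpre j (Finset.mem_range.1 hj))
  have hmid : β ^ k * d ≤ β ^ k * a k := mul_le_mul_of_nonneg_left hk (pow_pos h0 k).le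
  have hgeo : ∑' j : ℕ, β ^ j * (β ^ (k + 1) * m) = β ^ (k + 1) / (1 - β) * m := by
    rw [tsum_mul_right, tsum_geometric_of_lt_one h0.le h1]; ring
  have htail : β ^ (k + 1) / (1 - β) * m ≤ ∑' j : ℕ, β ^ (j + (k + 1)) * a (j + (k + 1)) := by
    rw [← hgeo]
    refine Summable.tsum_le_tsum (fun j => ?_)
      ((summable_geometric_of_lt_one h0.le h1).mul_right _) ((summable_nat_add_iff (k + 1)).2 hs)
    rw [← mul_assoc, ← pow_add]
    exact mul_le_mul_of_nonneg_left (hm _) (pow_pos h0 _).le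
  linarith

/-- near-optimal trajectories starting sufficiently close to the locally
dissipative equilibrium stay in the dissipativity neighbourhood `X_N` for `K` steps. -/
theorem near_optimal_trajectories_stay
    (f : X → U → X) (Y : Set (X × U)) (ℓ : X → U → ℝ) (lam : X → ℝ)
    (β : ℝ) (hβ : β ∈ Set.Ioo (0 : ℝ) 1)
    (hf : Continuous fun p : X × U => f p.1 p.2)
    (hℓ_bdd : ∃ B : ℝ, ∀ p ∈ Y, |ℓ p.1 p.2| ≤ B)
    (hℓ_lb : ∃ m : ℝ, ∀ (x : X) (v : U), m ≤ ℓ x v)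
    (hadm : ∀ x₀ ∈ stateSet Y, ∃ u : ℕ → U, Admissible f Y x₀ u)
    (xl : X) (ul : U) (X_N : Set X)
    (heq : (xl, ul) ∈ Y) (hfix : f xl ul = xl)
    (hXN : X_N ⊆ stateSet Y) (hXNnhds : X_N ∈ nhds xl)
    (hlam_bdd : ∃ B : ℝ, ∀ x : X, |lam x| ≤ B) (hlam0 : lam xl = 0)
    (αβ : ℝ → ℝ) (hαβ : KInfty αβ)
    (hdiss : ∀ x ∈ X_N, ∀ v : U,
      αβ (‖x - xl‖ + ‖v - ul‖) ≤ ℓ x v - ℓ xl ul + lam x - β * lam (f x v))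
    (ρ : ℝ) (hρ : 0 < ρ) (hball : Metric.ball xl ρ ⊆ X_N)
    (η : ℝ) (hη0 : 0 < η) (hηρ : η ≤ ρ)
    (hηf : ∀ p ∈ Y, ‖p.1 - xl‖ < η → ‖p.2 - ul‖ < η → ‖f p.1 p.2 - xl‖ < ρ)
    (δ lmin : ℝ) (hδ : δ = αβ η)
    (hlmin : lmin = sInf {r : ℝ | ∃ p ∈ Y, rot β ℓ f lam xl ul p.1 p.2 = r})
    (hlmin_neg : lmin < 0)
    (hβth : β < δ / (2 * (δ - lmin)))
    (γ : ℝ → ℝ) (hγ : KInfty γ)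
    (hVγ : ∀ x ∈ X_N, |Vinf β (rot β ℓ f lam xl ul) f Y x| ≤ γ ‖x - xl‖) :
    ∀ K : ℕ, ∃ ε > (0 : ℝ), ∃ θ > (0 : ℝ),
      ∀ x₀ : X, ‖x₀ - xl‖ < ε → ∀ u : ℕ → U, Admissible f Y x₀ u →
        Jinf β ℓ f x₀ u < Vinf β ℓ f Y x₀ + θ →
        ∀ k ≤ K, traj f x₀ u k ∈ X_N := by
  obtain ⟨h0, h1⟩ := hβ
  obtain ⟨B, hB⟩ := hℓ_bdd
  obtain ⟨C, hC⟩ := hlam_bdd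
  intro K
  have hδpos : 0 < δ := by
    rw [hδ, ← hαβ.zero]
    exact hαβ.mono Set.self_mem_Ici hη0.le hη0
  have h1β : 0 < 1 - β := by linarith
  set σ : ℝ := β ^ K * δ / (2 * (1 - β)) with hσ
  have hσpos : 0 < σ := by positivity
  have hrot : ∀ p ∈ Y, |rot β ℓ f lam xl ul p.1 p.2| ≤ B + |ℓ xl ul| + C + C := by
    intro p hp
    have hfl : |β * lam (f p.1 p.2)| ≤ C := by
      rw [abs_mul, abs_of_pos h0]
      nlinarith [hC (f p.1 p.2), abs_nonneg (lam (f p.1 p.2))]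
    have e1 := abs_le.1 (hB p hp)
    have e2 := abs_le.1 (hC p.1)
    have e3 := abs_le.1 hfl
    have e4 := abs_le.1 (le_refl |ℓ xl ul|)
    unfold rot
    exact abs_le.2 ⟨by linarith [e1.1, e2.1, e3.2, e4.2], by linarith [e1.2, e2.2, e3.1, e4.1]⟩
  have hlm : ∀ p ∈ Y, lmin ≤ rot β ℓ f lam xl ul p.1 p.2 := by
    intro p hp
    rw [hlmin]
    refine csInf_le ⟨-(B + |ℓ xl ul| + C + C), ?_⟩ ⟨p, hp, rfl⟩
    rintro r ⟨q, hq, rfl⟩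
    exact (abs_le.1 (hrot q hq)).1
  -- `γ` is continuous at `0` from the right with `γ 0 = 0`; this gives `ε` directly.
  obtain ⟨ε₀, hε₀, hγε⟩ := Metric.continuousWithinAt_iff.1
    (hγ.cont 0 Set.self_mem_Ici) (σ / 2) (by positivity)
  refine ⟨min ε₀ ρ, lt_min hε₀ hρ, σ / 2, by positivity, ?_⟩
  intro x₀ hx₀ u hu hJ
  have hx₀N : x₀ ∈ X_N :=
    hball (by rw [Metric.mem_ball, dist_eq_norm]; exact hx₀.trans_le (min_le_right _ _))
  have hγx : γ ‖x₀ - xl‖ < σ / 2 := by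
    have := hγε (x := ‖x₀ - xl‖) (norm_nonneg _)
      (by rw [Real.dist_eq, sub_zero, abs_norm]; exact hx₀.trans_le (min_le_left _ _))
    rw [Real.dist_eq, hγ.zero, sub_zero] at this
    exact (le_abs_self _).trans_lt this
  have hshift : ∀ v, Admissible f Y x₀ v → Jinf β (rot β ℓ f lam xl ul) f x₀ v
      = Jinf β ℓ f x₀ v + (lam x₀ - ℓ xl ul / (1 - β)) := fun v hv =>
    Jinf_rot h0 h1 f ℓ lam xl ul x₀ v (fun k => hB _ (hv k)) hC
  have hVle : ∀ v, Admissible f Y x₀ v → Vinf β ℓ f Y x₀ ≤ Jinf β ℓ f x₀ v := by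
    intro v hv
    refine csInf_le ⟨-(B / (1 - β)), ?_⟩ ⟨v, hv, rfl⟩
    rintro r ⟨w, hw, rfl⟩
    have hgeo : ∑' k : ℕ, β ^ k * (-B) = -(B / (1 - β)) := by
      rw [tsum_mul_right, tsum_geometric_of_lt_one h0.le h1]; ring
    rw [← hgeo]
    exact Summable.tsum_le_tsum
      (fun k => mul_le_mul_of_nonneg_left (abs_le.1 (hB _ (hw k))).1 (pow_pos h0 k).le)
      ((summable_geometric_of_lt_one h0.le h1).mul_right _)
      (summable_discounted h0 h1 fun k => hB _ (hw k))
  have hV : Vinf β ℓ f Y x₀ + (lam x₀ - ℓ xl ul / (1 - β))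
      ≤ Vinf β (rot β ℓ f lam xl ul) f Y x₀ := by
    refine le_csInf ⟨_, u, hu, rfl⟩ ?_
    rintro r ⟨v, hv, rfl⟩
    rw [hshift v hv]
    linarith [hVle v hv]
  have hJσ : Jinf β (rot β ℓ f lam xl ul) f x₀ u < σ := by
    rw [hshift u hu]
    linarith [(abs_le.1 (hVγ x₀ hx₀N)).2]
  intro k
  induction k using Nat.strong_induction_on with
  | _ n ih =>
    intro hn
    rcases n with _ | k
    · exact hx₀N
    have hin : ∀ j ≤ k, traj f x₀ u j ∈ X_N := fun j hj => ih j (by omega) (by omega)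
    by_cases hclose : ‖traj f x₀ u k - xl‖ < η ∧ ‖u k - ul‖ < η
    · refine hball ?_
      rw [Metric.mem_ball, dist_eq_norm]
      exact hηf _ (hu k) hclose.1 hclose.2
    exfalso
    have hfar : η ≤ ‖traj f x₀ u k - xl‖ + ‖u k - ul‖ := by
      by_contra! h
      exact hclose ⟨by linarith [norm_nonneg (u k - ul)],
        by linarith [norm_nonneg (traj f x₀ u k - xl)]⟩
    have hδk : δ ≤ rot β ℓ f lam xl ul (traj f x₀ u k) (u k) := by
      rw [hδ]
      exact (hαβ.mono.monotoneOn hη0.le (hη0.le.trans hfar) hfar).trans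
        (hdiss _ (hin k le_rfl) _)
    have hpre : ∀ j < k, 0 ≤ rot β ℓ f lam xl ul (traj f x₀ u j) (u j) := by
      intro j hj
      refine le_trans ?_ (hdiss _ (hin j hj.le) _)
      rw [← hαβ.zero]
      have hnn : 0 ≤ ‖traj f x₀ u j - xl‖ + ‖u j - ul‖ := by positivity
      exact hαβ.mono.monotoneOn Set.self_mem_Ici hnn hnn
    have hlow : β ^ k * δ + β ^ (k + 1) / (1 - β) * lmin
        ≤ Jinf β (rot β ℓ f lam xl ul) f x₀ u :=
      le_tsum_of_stage_bounds h0 h1 (summable_discounted h0 h1 fun j => hrot _ (hu j))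
        hpre hδk fun j => hlm _ (hu j)
    have hth : β * (2 * (δ - lmin)) < δ := (lt_div_iff₀ (by linarith)).1 hβth
    have hσk : σ ≤ β ^ k * (δ / (2 * (1 - β))) := by
      rw [hσ, mul_div_assoc]
      exact mul_le_mul_of_nonneg_right (pow_le_pow_of_le_one h0.le h1.le (by omega))
        (by positivity)
    have hmid : δ / (2 * (1 - β)) ≤ δ + β / (1 - β) * lmin := by
      have : δ + β / (1 - β) * lmin - δ / (2 * (1 - β))
          = (δ - β * (2 * (δ - lmin))) / (2 * (1 - β)) := by
        field_simp
        ring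
      have hq : 0 ≤ (δ - β * (2 * (δ - lmin))) / (2 * (1 - β)) :=
        div_nonneg (by linarith) (by linarith)
      linarith
    have hfac : β ^ k * δ + β ^ (k + 1) / (1 - β) * lmin
        = β ^ k * (δ + β / (1 - β) * lmin) := by
      rw [pow_succ]; ring
    linarith [mul_le_mul_of_nonneg_left hmid (pow_pos h0 k).le]
end
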